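/- arXiv:0710.5818 — 2 statements merged into one kernel-verified Lean document; each statement's English description precedes it below -/
import Mathlib

section
/- Let Q be a Noetherian local ring, f a nonzerodivisor on Q, R = Q/(f), and M, N finitely generated R-modules. Then there is a long exact sequence ... → Tor_n^R(M,N) → Tor_{n+1}^Q(M,N) → Tor_{n+1}^R(M,N) → Tor_{n-1}^R(M,N) → Tor_n^Q(M,N) → Tor_n^R(M,N) → ... → Tor_0^R(M,N) → Tor_1^Q(M,N) → Tor_1^R(M,N) → 0. -/
open CategoryTheory

/-- The `i`-th Tor group of two modules over a commutative ring, as a type. -/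
noncomputable abbrev TorGrp (A : Type) [CommRing A] (i : ℕ)
    (M N : Type) [AddCommGroup M] [Module A M] [AddCommGroup N] [Module A N] : Type :=
  ((Tor (ModuleCat.{0} A) i).obj (ModuleCat.of A M)).obj (ModuleCat.of A N)

open CategoryTheory MonoidalCategory

lemma TT_nat_aux {C D : Type*} [Category C] [Category D] [Abelian C] [Abelian D]
    {F G : C ⥤ D} [F.Additive] [G.Additive] (α : F ⟶ G) {X : C} (P : ProjectiveResolution X) :
    HomologicalComplex.homologyMap ((NatTrans.mapHomologicalComplex α _).app P.complex) 0 ≫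
      ((ChainComplex.isoHomologyι₀ _).hom ≫ P.fromLeftDerivedZero' G) =
    ((ChainComplex.isoHomologyι₀ _).hom ≫ P.fromLeftDerivedZero' F) ≫ α.app X := by
  have h : HomologicalComplex.opcyclesMap ((NatTrans.mapHomologicalComplex α _).app P.complex) 0 ≫
      P.fromLeftDerivedZero' G = P.fromLeftDerivedZero' F ≫ α.app X := by
    rw [← cancel_epi (HomologicalComplex.pOpcycles _ _),
      HomologicalComplex.p_opcyclesMap_assoc,
      ProjectiveResolution.pOpcycles_comp_fromLeftDerivedZero',
      ProjectiveResolution.pOpcycles_comp_fromLeftDerivedZero'_assoc]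
    exact (α.naturality _).symm
  rw [Category.assoc, ← h]
  exact HomologicalComplex.homologyι_naturality_assoc _ _ _

section TTsec

variable (A : Type) [CommRing A] (N : Type) [AddCommGroup N] [Module A N]

noncomputable def TTres : ProjectiveResolution (ModuleCat.of A N) := projectiveResolution _

noncomputable def TTcx (X : Type) [AddCommGroup X] [Module A X] :
    ChainComplex (ModuleCat.{0} A) ℕ :=
  (((tensoringLeft (ModuleCat.{0} A)).obj (ModuleCat.of A X)).mapHomologicalComplex _).obj
    (TTres A N).complex

noncomputable def TTcxMap {X Y : Type} [AddCommGroup X] [Module A X] [AddCommGroup Y] [Module A Y]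
    (g : X →ₗ[A] Y) : TTcx A N X ⟶ TTcx A N Y :=
  (NatTrans.mapHomologicalComplex ((tensoringLeft (ModuleCat.{0} A)).map (ModuleCat.ofHom g)) _).app
    (TTres A N).complex

noncomputable abbrev TT (X : Type) [AddCommGroup X] [Module A X] (n : ℕ) : Type :=
  (TTcx A N X).homology n

noncomputable def TTmap {X Y : Type} [AddCommGroup X] [Module A X] [AddCommGroup Y] [Module A Y]
    (g : X →ₗ[A] Y) (n : ℕ) : TT A N X n →ₗ[A] TT A N Y n :=
  (HomologicalComplex.homologyMap (TTcxMap A N g) n).hom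

noncomputable def TTiso (X : Type) [AddCommGroup X] [Module A X] (n : ℕ) :
    TorGrp A n X N ≃ₗ[A] TT A N X n :=
  ((TTres A N).isoLeftDerivedObj ((tensoringLeft (ModuleCat.{0} A)).obj (ModuleCat.of A X)) n).toLinearEquiv

variable {X Y Z : Type} [AddCommGroup X] [Module A X] [AddCommGroup Y] [Module A Y]
  [AddCommGroup Z] [Module A Z]

lemma TTcxMap_comp (g : X →ₗ[A] Y) (h : Y →ₗ[A] Z) :
    TTcxMap A N (h ∘ₗ g) = TTcxMap A N g ≫ TTcxMap A N h := by
  unfold TTcxMap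
  rw [ModuleCat.ofHom_comp, Functor.map_comp]
  rfl

lemma TTmap_comp (g : X →ₗ[A] Y) (h : Y →ₗ[A] Z) (n : ℕ) :
    TTmap A N (h ∘ₗ g) n = TTmap A N h n ∘ₗ TTmap A N g n := by
  unfold TTmap
  rw [TTcxMap_comp, HomologicalComplex.homologyMap_comp]
  rfl

lemma TTcxMap_zero : TTcxMap A N (0 : X →ₗ[A] Y) = 0 := by
  ext n : 1
  apply ModuleCat.hom_ext
  change LinearMap.rTensor _ (0 : X →ₗ[A] Y) = 0
  simp

lemma TTmap_zero (n : ℕ) : TTmap A N (0 : X →ₗ[A] Y) n = 0 := by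
  unfold TTmap
  rw [TTcxMap_zero, HomologicalComplex.homologyMap_zero]
  rfl

instance TTflat (n : ℕ) : Module.Flat A ((TTres A N).complex.X n) := by
  have : Projective ((TTres A N).complex.X n) := inferInstance
  have := (IsProjective.iff_projective ((TTres A N).complex.X n)).mpr this
  infer_instance

noncomputable def TTsc (i : X →ₗ[A] Y) (p : Y →ₗ[A] Z) (h : Function.Exact i p) :
    ShortComplex (ChainComplex (ModuleCat.{0} A) ℕ) :=
  ShortComplex.mk (TTcxMap A N i) (TTcxMap A N p) (by
    rw [← TTcxMap_comp, h.linearMap_comp_eq_zero, TTcxMap_zero])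

lemma TTsc_shortExact (i : X →ₗ[A] Y) (p : Y →ₗ[A] Z) (h : Function.Exact i p)
    (hi : Function.Injective i) (hp : Function.Surjective p) : (TTsc A N i p h).ShortExact := by
  apply HomologicalComplex.shortExact_of_degreewise_shortExact
  intro n
  refine ShortComplex.ShortExact.mk' ?_ ?_ ?_
  · rw [ShortComplex.ShortExact.moduleCat_exact_iff_function_exact]
    exact Module.Flat.rTensor_exact ((TTres A N).complex.X n) h
  · rw [ModuleCat.mono_iff_injective]
    exact Module.Flat.rTensor_preserves_injective_linearMap (M := (TTres A N).complex.X n) i hi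
  · rw [ModuleCat.epi_iff_surjective]
    exact LinearMap.rTensor_surjective ((TTres A N).complex.X n) hp

lemma TTles (i : X →ₗ[A] Y) (p : Y →ₗ[A] Z) (h : Function.Exact i p)
    (hi : Function.Injective i) (hp : Function.Surjective p) :
    ∃ δ : ∀ n, TT A N Z (n + 1) →ₗ[A] TT A N X n,
      (∀ n, Function.Exact (δ n) (TTmap A N i n)) ∧
      (∀ n, Function.Exact (TTmap A N i n) (TTmap A N p n)) ∧
      (∀ n, Function.Exact (TTmap A N p (n + 1)) (δ n)) := by
  have H := TTsc_shortExact A N i p h hi hp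
  refine ⟨fun n => (H.δ (n + 1) n (by simp)).hom, fun n => ?_, fun n => ?_, fun n => ?_⟩
  · exact (ShortComplex.ShortExact.moduleCat_exact_iff_function_exact _).1
      (H.homology_exact₁ (n + 1) n (by simp))
  · exact (ShortComplex.ShortExact.moduleCat_exact_iff_function_exact _).1 (H.homology_exact₂ n)
  · exact (ShortComplex.ShortExact.moduleCat_exact_iff_function_exact _).1
      (H.homology_exact₃ (n + 1) n (by simp))

lemma TTmap_zero_surj (p : Y →ₗ[A] Z) (hp : Function.Surjective p) :
    Function.Surjective (TTmap A N p 0) := by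
  have : Epi ((TTcxMap A N p).f 0) := by
    rw [ModuleCat.epi_iff_surjective]
    exact LinearMap.rTensor_surjective ((TTres A N).complex.X 0) hp
  have := HomologicalComplex.epi_homologyMap_of_epi_of_not_rel (TTcxMap A N p) 0 (by simp)
  exact (ModuleCat.epi_iff_surjective _).1 this

lemma TT_flat_subsingleton [Module.Flat A X] (n : ℕ) : Subsingleton (TT A N X (n + 1)) := by
  have h := Module.Flat.lTensor_shortComplex_exact (ModuleCat.of A X) _ ((TTres A N).exact_succ n)
  apply ModuleCat.subsingleton_of_isZero
  rw [← HomologicalComplex.exactAt_iff_isZero_homology,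
    HomologicalComplex.exactAt_iff' _ (n + 2) (n + 1) n (by simp) (by simp)]
  exact h

instance TTcolim (X : Type) [AddCommGroup X] [Module A X] : Limits.PreservesFiniteColimits
    ((tensoringLeft (ModuleCat.{0} A)).obj (ModuleCat.of A X)) :=
  inferInstanceAs (Limits.PreservesFiniteColimits (tensorLeft (ModuleCat.of A X)))

noncomputable def TTzeroHom (X : Type) [AddCommGroup X] [Module A X] :
    (TTcx A N X).homology 0 ⟶ ModuleCat.of A (TensorProduct A X N) :=
  (ChainComplex.isoHomologyι₀ (TTcx A N X)).hom ≫
    ((TTres A N).fromLeftDerivedZero' ((tensoringLeft (ModuleCat.{0} A)).obj (ModuleCat.of A X)))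

instance TTzeroHom_isIso (X : Type) [AddCommGroup X] [Module A X] : IsIso (TTzeroHom A N X) := by
  unfold TTzeroHom
  have : IsIso ((TTres A N).fromLeftDerivedZero'
    ((tensoringLeft (ModuleCat.{0} A)).obj (ModuleCat.of A X))) := inferInstance
  exact IsIso.comp_isIso' inferInstance this

noncomputable def TTzero (X : Type) [AddCommGroup X] [Module A X] :
    TT A N X 0 ≃ₗ[A] TensorProduct A X N :=
  (asIso (TTzeroHom A N X)).toLinearEquiv

lemma TTzeroHom_nat (g : X →ₗ[A] Y) :
    HomologicalComplex.homologyMap (TTcxMap A N g) 0 ≫ TTzeroHom A N Y =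
      TTzeroHom A N X ≫ ModuleCat.ofHom (g.rTensor N) :=
  TT_nat_aux ((tensoringLeft (ModuleCat.{0} A)).map (ModuleCat.ofHom g)) (TTres A N)

lemma TTzero_nat (g : X →ₗ[A] Y) (x : TT A N X 0) :
    TTzero A N Y (TTmap A N g 0 x) = g.rTensor N (TTzero A N X x) :=
  congrArg (fun k => k.hom x) (TTzeroHom_nat A N g)

end TTsec

section TTcmp

open TensorProduct

lemma TTshift (A : Type) [CommRing A] (N : Type) [AddCommGroup N] [Module A N]
    {X Y Z : Type} [AddCommGroup X] [Module A X] [AddCommGroup Y] [Module A Y]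
    [AddCommGroup Z] [Module A Z] [Module.Flat A Y]
    (i : X →ₗ[A] Y) (p : Y →ₗ[A] Z) (h : Function.Exact i p)
    (hi : Function.Injective i) (hp : Function.Surjective p) (n : ℕ) :
    Nonempty (TT A N Z (n + 1) ≃+ LinearMap.ker (TTmap A N i n)) := by
  obtain ⟨δ, h1, _, h3⟩ := TTles A N i p h hi hp
  have hinj : Function.Injective (δ n) := by
    rw [injective_iff_map_eq_zero]
    intro a ha
    obtain ⟨b, rfl⟩ := (h3 n a).1 ha
    have := TT_flat_subsingleton A N (X := Y) n
    rw [Subsingleton.elim b 0, map_zero]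
  exact ⟨((LinearEquiv.ofInjective (δ n) hinj).trans
    (LinearEquiv.ofEq _ _ (LinearMap.exact_iff.1 (h1 n)).symm)).toAddEquiv⟩

lemma kerEquivAux {A B : Type} [CommRing A] [CommRing B] {X Y X' Y' : Type}
    [AddCommGroup X] [Module A X] [AddCommGroup Y] [Module A Y]
    [AddCommGroup X'] [Module B X'] [AddCommGroup Y'] [Module B Y']
    (g : X →ₗ[A] Y) (g' : X' →ₗ[B] Y') (e : X ≃+ X')
    (h : ∀ x, g x = 0 ↔ g' (e x) = 0) :
    Nonempty (LinearMap.ker g ≃+ LinearMap.ker g') :=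
  ⟨{ toFun := fun x => ⟨e x, (h x).1 x.2⟩
     invFun := fun y => ⟨e.symm y, (h _).2 (by simp)⟩
     left_inv := fun x => by simp
     right_inv := fun x => by simp
     map_add' := fun x y => by ext; simp }⟩

lemma baseChange_exact_aux {A : Type} [CommRing A] (B : Type) [CommRing B] [Algebra A B]
    {X Y Z : Type} [AddCommGroup X] [Module A X] [AddCommGroup Y] [Module A Y]
    [AddCommGroup Z] [Module A Z]
    (i : X →ₗ[A] Y) (p : Y →ₗ[A] Z) (h : Function.Exact i p)
    (hp : Function.Surjective p) : Function.Exact (i.baseChange B) (p.baseChange B) :=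
  lTensor_exact B h hp

variable {Q : Type} [CommRing Q] (f : Q)

lemma one_tmul_surj {K : Type} [AddCommGroup K] [Module Q K]
    (z : (Q ⧸ Ideal.span {f}) ⊗[Q] K) : ∃ k : K, (1 : Q ⧸ Ideal.span {f}) ⊗ₜ[Q] k = z :=
  TensorProduct.mk_surjective Q K _ Ideal.Quotient.mk_surjective z

lemma one_tmul_zero {K : Type} [AddCommGroup K] [Module Q K] (k : K) :
    (1 : Q ⧸ Ideal.span {f}) ⊗ₜ[Q] k = 0 ↔ ∃ k', k = f • k' := by
  constructor
  · intro h
    have := congrArg (TensorProduct.quotTensorEquivQuotSMul K (Ideal.span {f})) h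
    rw [map_zero] at this
    have h2 : Submodule.Quotient.mk (p := Ideal.span {f} • (⊤ : Submodule Q K)) k = 0 := by
      rw [← this]
      exact ((TensorProduct.quotTensorEquivQuotSMul_mk_tmul (Ideal.span {f}) 1 k).trans
        (by simp)).symm
    rw [Submodule.Quotient.mk_eq_zero, Submodule.ideal_span_singleton_smul,
      Submodule.mem_smul_pointwise_iff_exists] at h2
    obtain ⟨b, _, hb⟩ := h2
    exact ⟨b, hb.symm⟩
  · rintro ⟨k', rfl⟩
    rw [← TensorProduct.smul_tmul]
    have : f • (1 : Q ⧸ Ideal.span {f}) = 0 := by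
      rw [Algebra.smul_def, mul_one]
      exact Ideal.Quotient.eq_zero_iff_mem.2 (Ideal.mem_span_singleton_self f)
    rw [this, TensorProduct.zero_tmul]

lemma freeCover (hf : f ∈ nonZeroDivisors Q) (M : Type) [AddCommGroup M] [Module Q M] :
    ∃ (K F : Type) (_ : AddCommGroup K) (_ : AddCommGroup F) (_ : Module Q K) (_ : Module Q F)
      (i : K →ₗ[Q] F) (p : F →ₗ[Q] M), Module.Free Q F ∧ Function.Injective i ∧
        Function.Surjective p ∧ Function.Exact i p ∧
        (∀ x : F, f • x = 0 → x = 0) ∧ (∀ x : K, f • x = 0 → x = 0) := by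
  have hF : ∀ x : M →₀ Q, f • x = 0 → x = 0 := by
    intro x hx
    ext a
    have := DFunLike.congr_fun hx a
    exact (mem_nonZeroDivisors_iff.1 hf).1 _ (by simpa using this)
  exact ⟨LinearMap.ker (Finsupp.linearCombination Q (id : M → M)), M →₀ Q, inferInstance,
      inferInstance, inferInstance, inferInstance, Submodule.subtype _,
      Finsupp.linearCombination Q id, inferInstance, Subtype.val_injective,
      Finsupp.linearCombination_id_surjective Q M, LinearMap.exact_subtype_ker_map _,
      hF, fun k hk => Subtype.ext (hF _ (congrArg Subtype.val hk))⟩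

variable (N : Type) [AddCommGroup N] [Module Q N] [Module (Q ⧸ Ideal.span {f}) N]
  [IsScalarTower Q (Q ⧸ Ideal.span {f}) N]

noncomputable def cbc (K : Type) [AddCommGroup K] [Module Q K] :
    K ⊗[Q] N ≃+ ((Q ⧸ Ideal.span {f}) ⊗[Q] K) ⊗[Q ⧸ Ideal.span {f}] N :=
  ((TensorProduct.comm Q K N).toAddEquiv.trans
    (TensorProduct.AlgebraTensorModule.cancelBaseChange Q (Q ⧸ Ideal.span {f})
      (Q ⧸ Ideal.span {f}) N K).symm.toAddEquiv).trans
    (TensorProduct.comm (Q ⧸ Ideal.span {f}) N ((Q ⧸ Ideal.span {f}) ⊗[Q] K)).toAddEquiv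

lemma cbc_tmul {K : Type} [AddCommGroup K] [Module Q K] (k : K) (n : N) :
    cbc f N K (k ⊗ₜ n) = ((1 : Q ⧸ Ideal.span {f}) ⊗ₜ k) ⊗ₜ n := by
  simp [cbc]

lemma cbc_nat {K L : Type} [AddCommGroup K] [Module Q K] [AddCommGroup L] [Module Q L]
    (g : K →ₗ[Q] L) (x : K ⊗[Q] N) :
    cbc f N L (g.rTensor N x) = (g.baseChange (Q ⧸ Ideal.span {f})).rTensor N (cbc f N K x) := by
  induction x with
  | zero => simp
  | add x y hx hy => simp only [map_add, hx, hy]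
  | tmul k n => simp [cbc_tmul]

noncomputable def TTez (K : Type) [AddCommGroup K] [Module Q K] :
    TT Q N K 0 ≃+ TT (Q ⧸ Ideal.span {f}) N ((Q ⧸ Ideal.span {f}) ⊗[Q] K) 0 :=
  ((TTzero Q N K).toAddEquiv.trans (cbc f N K)).trans
    (TTzero (Q ⧸ Ideal.span {f}) N ((Q ⧸ Ideal.span {f}) ⊗[Q] K)).symm.toAddEquiv

lemma TTez_nat {K L : Type} [AddCommGroup K] [Module Q K] [AddCommGroup L] [Module Q L]
    (g : K →ₗ[Q] L) (x : TT Q N K 0) :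
    TTez f N L (TTmap Q N g 0 x) =
      TTmap (Q ⧸ Ideal.span {f}) N (g.baseChange (Q ⧸ Ideal.span {f})) 0 (TTez f N K x) := by
  apply (TTzero (Q ⧸ Ideal.span {f}) N ((Q ⧸ Ideal.span {f}) ⊗[Q] L)).injective
  rw [TTzero_nat]
  simp [TTez, TTzero_nat, cbc_nat]

lemma TTkerEquiv {K F : Type} [AddCommGroup K] [Module Q K] [AddCommGroup F] [Module Q F]
    [Module.Flat Q F] (g : K →ₗ[Q] F) (n : ℕ)
    (h : Nonempty (TT Q N K n ≃+
      TT (Q ⧸ Ideal.span {f}) N ((Q ⧸ Ideal.span {f}) ⊗[Q] K) n)) :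
    Nonempty (LinearMap.ker (TTmap Q N g n) ≃+ LinearMap.ker
      (TTmap (Q ⧸ Ideal.span {f}) N (g.baseChange (Q ⧸ Ideal.span {f})) n)) := by
  cases n with
  | zero =>
    refine kerEquivAux _ _ (TTez f N K) fun x => ?_
    rw [← TTez_nat]
    exact (TTez f N F).map_eq_zero_iff.symm
  | succ n =>
    obtain ⟨e⟩ := h
    refine kerEquivAux _ _ e fun x => ?_
    have h1 := TT_flat_subsingleton Q N (X := F) n
    have h2 := TT_flat_subsingleton (Q ⧸ Ideal.span {f}) N (X := (Q ⧸ Ideal.span {f}) ⊗[Q] F) n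
    exact ⟨fun _ => Subsingleton.elim _ _, fun _ => Subsingleton.elim _ _⟩

lemma TTcompare (hf : f ∈ nonZeroDivisors Q) (n : ℕ) :
    ∀ (K : Type) [AddCommGroup K] [Module Q K], (∀ k : K, f • k = 0 → k = 0) →
    Nonempty (TT Q N K n ≃+
      TT (Q ⧸ Ideal.span {f}) N ((Q ⧸ Ideal.span {f}) ⊗[Q] K) n) := by
  induction n with
  | zero => exact fun K _ _ _ => ⟨TTez f N K⟩
  | succ n ih =>
    intro K _ _ hK
    obtain ⟨K1, F, _, _, _, _, i, p, hfr, hi, hp, hex, hF, hK1⟩ := freeCover f hf K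
    obtain ⟨e1⟩ := TTshift Q N i p hex hi hp n
    have hex' : Function.Exact (i.baseChange (Q ⧸ Ideal.span {f}))
      (p.baseChange (Q ⧸ Ideal.span {f})) :=
      baseChange_exact_aux _ i p hex hp
    have hp' : Function.Surjective (p.baseChange (Q ⧸ Ideal.span {f})) :=
      LinearMap.lTensor_surjective _ hp
    have hi' : Function.Injective (i.baseChange (Q ⧸ Ideal.span {f})) := by
      rw [injective_iff_map_eq_zero]
      intro z hz
      obtain ⟨k, rfl⟩ := one_tmul_surj f z
      rw [LinearMap.baseChange_tmul, one_tmul_zero] at hz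
      obtain ⟨x, hx⟩ := hz
      rw [one_tmul_zero]
      have : p x = 0 := by
        apply hK
        rw [← map_smul, ← hx]
        exact hex.apply_apply_eq_zero k
      obtain ⟨k', rfl⟩ := (hex x).1 this
      exact ⟨k', hi (by rw [hx, map_smul])⟩
    obtain ⟨e3⟩ := TTshift (Q ⧸ Ideal.span {f}) N _ _ hex' hi' hp' n
    obtain ⟨e2⟩ := TTkerEquiv f N i n
      (ih K1 hK1)
    exact ⟨(e1.trans e2).trans e3.symm⟩

end TTcmp


section TTmain

open TensorProduct

/-- Final assembly for abstract modules: two short exact sequences. -/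
lemma TTassemble (R : Type) [CommRing R] (N M K F S : Type)
    [AddCommGroup N] [Module R N] [AddCommGroup M] [Module R M] [AddCommGroup K] [Module R K]
    [AddCommGroup F] [Module R F] [AddCommGroup S] [Module R S] [Module.Flat R F]
    (α : M →ₗ[R] K) (β : K →ₗ[R] S) (s : S →ₗ[R] F) (ε : F →ₗ[R] M)
    (h1 : Function.Exact α β) (hα : Function.Injective α) (hβ : Function.Surjective β)
    (h2 : Function.Exact s ε) (hs : Function.Injective s) (hε : Function.Surjective ε)
    (U : ℕ → Type) [∀ n, AddCommGroup (U n)] (V : ℕ → Type) [∀ n, AddCommGroup (V n)]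
    (eU : ∀ n, U n ≃+ TT R N M n)
    (eV : ∀ n, V (n + 1) ≃+ LinearMap.ker (TTmap R N (s ∘ₗ β) n)) :
    ∃ (a : ∀ n : ℕ, U n →+ V (n + 1)) (b : ∀ n : ℕ, V (n + 1) →+ U (n + 1))
      (c : ∀ n : ℕ, U (n + 2) →+ U n),
      (∀ n, Function.Exact (c n) (a n)) ∧
      (∀ n, Function.Exact (a n) (b n)) ∧
      (∀ n, Function.Exact (b (n + 1)) (c n)) ∧
      Function.Surjective (b 0) := by
  have eY := fun n => (TTshift R N s ε h2 hs hε n).some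
  obtain ⟨δ, d1, d2, d3⟩ := TTles R N α β h1 hα hβ
  have hsub : ∀ n, Subsingleton (TT R N F (n + 1)) := fun n => TT_flat_subsingleton R N n
  have hcomp : ∀ n x, TTmap R N (s ∘ₗ β) n x = TTmap R N s n (TTmap R N β n x) := fun n x => by
    rw [TTmap_comp]; rfl
  have ha : ∀ n x, TTmap R N α n x ∈ LinearMap.ker (TTmap R N (s ∘ₗ β) n) := fun n x => by
    rw [LinearMap.mem_ker, hcomp, (d2 n).apply_apply_eq_zero, map_zero]
  have hb : ∀ n, ∀ x ∈ LinearMap.ker (TTmap R N (s ∘ₗ β) n),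
      TTmap R N β n x ∈ LinearMap.ker (TTmap R N s n) := fun n x hx => by
    rwa [LinearMap.mem_ker, ← hcomp]
  let a0 : ∀ n, TT R N M n →ₗ[R] LinearMap.ker (TTmap R N (s ∘ₗ β) n) :=
    fun n => LinearMap.codRestrict _ (TTmap R N α n) (ha n)
  let b0 : ∀ n, LinearMap.ker (TTmap R N (s ∘ₗ β) n) →ₗ[R] LinearMap.ker (TTmap R N s n) :=
    fun n => (TTmap R N β n).restrict (hb n)
  let c0 : ∀ n, LinearMap.ker (TTmap R N s (n + 1)) →ₗ[R] TT R N M n :=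
    fun n => δ n ∘ₗ Submodule.subtype _
  have ea0 : ∀ n x, ((a0 n x : LinearMap.ker (TTmap R N (s ∘ₗ β) n)) : TT R N K n) =
    TTmap R N α n x := fun _ _ => rfl
  have eb0 : ∀ n x, ((b0 n x : LinearMap.ker (TTmap R N s n)) : TT R N S n) =
    TTmap R N β n x := fun _ _ => rfl
  have ec0 : ∀ n x, c0 n x = δ n x := fun _ _ => rfl
  have x1 : ∀ n, Function.Exact (c0 n) (a0 n) := by
    intro n x
    rw [← Submodule.coe_eq_zero, ea0, d1 n x]
    constructor
    · rintro ⟨y, rfl⟩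
      exact ⟨⟨y, (hsub n).elim _ _⟩, rfl⟩
    · rintro ⟨y, rfl⟩
      exact ⟨y, rfl⟩
  have x2 : ∀ n, Function.Exact (a0 n) (b0 n) := by
    intro n x
    rw [← Submodule.coe_eq_zero, eb0, d2 n x]
    constructor
    · rintro ⟨y, hy⟩
      exact ⟨y, Subtype.ext hy⟩
    · rintro ⟨y, rfl⟩
      exact ⟨y, rfl⟩
  have x3 : ∀ n, Function.Exact (b0 (n + 1)) (c0 n) := by
    intro n x
    rw [ec0, d3 n x]
    constructor
    · rintro ⟨y, hy⟩
      exact ⟨⟨y, (hsub n).elim _ _⟩, Subtype.ext hy⟩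
    · rintro ⟨y, rfl⟩
      exact ⟨y, rfl⟩
  have x4 : Function.Surjective (b0 0) := by
    intro y
    obtain ⟨x, hx⟩ := TTmap_zero_surj R N β hβ y.1
    refine ⟨⟨x, ?_⟩, Subtype.ext hx⟩
    rw [LinearMap.mem_ker, hcomp, hx]
    exact y.2
  let eW : ∀ n, U (n + 1) ≃+ LinearMap.ker (TTmap R N s n) := fun n => (eU (n + 1)).trans (eY n)
  refine ⟨fun n => ((eV n).symm.toAddMonoidHom.comp (a0 n).toAddMonoidHom).comp
      (eU n).toAddMonoidHom,
    fun n => ((eW n).symm.toAddMonoidHom.comp (b0 n).toAddMonoidHom).comp (eV n).toAddMonoidHom,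
    fun n => ((eU n).symm.toAddMonoidHom.comp (c0 n).toAddMonoidHom).comp
      (eW (n + 1)).toAddMonoidHom, fun n x => ?_, fun n x => ?_, fun n x => ?_, fun y => ?_⟩
  · change (eV n).symm (a0 n (eU n x)) = 0 ↔ _
    rw [AddEquiv.map_eq_zero_iff, x1 n]
    constructor
    · rintro ⟨y, hy⟩
      refine ⟨(eW (n + 1)).symm y, ?_⟩
      change (eU n).symm (c0 n (eW (n + 1) ((eW (n + 1)).symm y))) = x
      rw [AddEquiv.apply_symm_apply, hy, AddEquiv.symm_apply_apply]
    · rintro ⟨y, rfl⟩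
      refine ⟨eW (n + 1) y, ?_⟩
      change _ = eU n ((eU n).symm (c0 n (eW (n + 1) y)))
      rw [AddEquiv.apply_symm_apply]
  · change (eW n).symm (b0 n (eV n x)) = 0 ↔ _
    rw [AddEquiv.map_eq_zero_iff, x2 n]
    constructor
    · rintro ⟨y, hy⟩
      refine ⟨(eU n).symm y, ?_⟩
      change (eV n).symm (a0 n (eU n ((eU n).symm y))) = x
      rw [AddEquiv.apply_symm_apply, hy, AddEquiv.symm_apply_apply]
    · rintro ⟨y, rfl⟩
      refine ⟨eU n y, ?_⟩
      change _ = eV n ((eV n).symm (a0 n (eU n y)))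
      rw [AddEquiv.apply_symm_apply]
  · change (eU n).symm (c0 n (eW (n + 1) x)) = 0 ↔ _
    rw [AddEquiv.map_eq_zero_iff, x3 n]
    constructor
    · rintro ⟨y, hy⟩
      refine ⟨(eV (n + 1)).symm y, ?_⟩
      change (eW (n + 1)).symm (b0 (n + 1) (eV (n + 1) ((eV (n + 1)).symm y))) = x
      rw [AddEquiv.apply_symm_apply, hy, AddEquiv.symm_apply_apply]
    · rintro ⟨y, rfl⟩
      refine ⟨eV (n + 1) y, ?_⟩
      change _ = eW (n + 1) ((eW (n + 1)).symm (b0 (n + 1) (eV (n + 1) y)))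
      rw [AddEquiv.apply_symm_apply]
  · obtain ⟨x, hx⟩ := x4 (eW 0 y)
    refine ⟨(eV 0).symm x, ?_⟩
    change (eW 0).symm (b0 0 (eV 0 ((eV 0).symm x))) = y
    rw [AddEquiv.apply_symm_apply, hx, AddEquiv.symm_apply_apply]

end TTmain

/-- Let `Q` be a Noetherian local ring, `f` a nonzerodivisor on `Q`, `R = Q/(f)` and
`M, N` finitely generated `R`-modules.  There is a long exact sequence
`… → Tor_n^R(M,N) → Tor_{n+1}^Q(M,N) → Tor_{n+1}^R(M,N) → Tor_{n-1}^R(M,N) → … →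
Tor_0^R(M,N) → Tor_1^Q(M,N) → Tor_1^R(M,N) → 0`. -/
theorem stmt1 (Q : Type) [CommRing Q] [IsNoetherianRing Q] [IsLocalRing Q]
    (f : Q) (hf : f ∈ nonZeroDivisors Q)
    (M N : Type) [AddCommGroup M] [AddCommGroup N]
    [Module Q M] [Module Q N]
    [Module (Q ⧸ Ideal.span {f}) M] [Module (Q ⧸ Ideal.span {f}) N]
    [IsScalarTower Q (Q ⧸ Ideal.span {f}) M] [IsScalarTower Q (Q ⧸ Ideal.span {f}) N]
    [Module.Finite (Q ⧸ Ideal.span {f}) M] [Module.Finite (Q ⧸ Ideal.span {f}) N] :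
    ∃ (a : ∀ n : ℕ, TorGrp (Q ⧸ Ideal.span {f}) n M N →+ TorGrp Q (n + 1) M N)
      (b : ∀ n : ℕ, TorGrp Q (n + 1) M N →+ TorGrp (Q ⧸ Ideal.span {f}) (n + 1) M N)
      (c : ∀ n : ℕ, TorGrp (Q ⧸ Ideal.span {f}) (n + 2) M N →+
        TorGrp (Q ⧸ Ideal.span {f}) n M N),
      (∀ n, Function.Exact (c n) (a n)) ∧
      (∀ n, Function.Exact (a n) (b n)) ∧
      (∀ n, Function.Exact (b (n + 1)) (c n)) ∧
      Function.Surjective (b 0) := by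
  obtain ⟨K, F, _, _, _, _, i, p, hfr, hi, hp, hex, hF, hK⟩ := freeCover f hf M
  have hfM : ∀ m : M, f • m = 0 := fun m => by
    rw [← IsScalarTower.algebraMap_smul (Q ⧸ Ideal.span {f}) f m]
    have : algebraMap Q (Q ⧸ Ideal.span {f}) f = 0 :=
      Ideal.Quotient.eq_zero_iff_mem.2 (Ideal.mem_span_singleton_self f)
    rw [this, zero_smul]
  have hfx : ∀ x : F, ∃ k : K, i k = f • x := fun x =>
    (hex _).1 (by rw [map_smul, hfM])
  choose g hg using hfx
  -- the map `M → R ⊗ K`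
  let φ : F →ₗ[Q] TensorProduct Q (Q ⧸ Ideal.span {f}) K :=
    { toFun := fun x => TensorProduct.tmul Q 1 (g x)
      map_add' := fun x y => by
        rw [← TensorProduct.tmul_add]
        congr 1
        apply hi
        rw [map_add, hg, hg, hg, smul_add]
      map_smul' := fun r x => by
        rw [RingHom.id_apply, ← TensorProduct.tmul_smul]
        congr 1
        apply hi
        rw [map_smul, hg, hg, smul_comm] }
  have hφ : ∀ x, φ x = TensorProduct.tmul Q 1 (g x) := fun _ => rfl
  have hφp : ∀ x, φ x = 0 ↔ p x = 0 := by
    intro x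
    rw [hφ, one_tmul_zero]
    constructor
    · rintro ⟨k, hk⟩
      have h1 : f • (x - i k) = 0 := by
        rw [smul_sub, ← hg, hk, map_smul, sub_self]
      rw [sub_eq_zero.1 (hF _ h1)]
      exact hex.apply_apply_eq_zero k
    · intro h
      obtain ⟨k, rfl⟩ := (hex x).1 h
      exact ⟨k, hi (by rw [hg, map_smul])⟩
  let α0 : M →ₗ[Q] TensorProduct Q (Q ⧸ Ideal.span {f}) K :=
    ((LinearMap.ker p).liftQ φ (fun x hx => (hφp x).2 hx)) ∘ₗ
      (p.quotKerEquivOfSurjective hp).symm.toLinearMap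
  let α : M →ₗ[Q ⧸ Ideal.span {f}] TensorProduct Q (Q ⧸ Ideal.span {f}) K :=
    α0.extendScalarsOfSurjective Ideal.Quotient.mk_surjective
  have hα : ∀ x, α (p x) = φ x := by
    intro x
    have : (p.quotKerEquivOfSurjective hp).symm (p x) = Submodule.Quotient.mk x := by
      rw [LinearEquiv.symm_apply_eq]; rfl
    change (LinearMap.ker p).liftQ φ (fun x hx => (hφp x).2 hx) ((p.quotKerEquivOfSurjective hp).symm (p x)) = _
    rw [this]; rfl
  let j := i.baseChange (Q ⧸ Ideal.span {f})
  let ε : TensorProduct Q (Q ⧸ Ideal.span {f}) F →ₗ[Q ⧸ Ideal.span {f}] M :=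
    p.liftBaseChange (Q ⧸ Ideal.span {f})
  have hj : ∀ k, j (TensorProduct.tmul Q 1 k) = TensorProduct.tmul Q 1 (i k) := fun k => by
    simp [j]
  have hεt : ∀ x, ε (TensorProduct.tmul Q 1 x) = p x := fun x => by
    simp [ε]
  have hsb : (LinearMap.range j).subtype ∘ₗ j.rangeRestrict = j := rfl
  refine TTassemble (Q ⧸ Ideal.span {f}) N M (TensorProduct Q (Q ⧸ Ideal.span {f}) K)
    (TensorProduct Q (Q ⧸ Ideal.span {f}) F) (LinearMap.range j) α j.rangeRestrict
    (LinearMap.range j).subtype ε ?_ ?_ j.surjective_rangeRestrict ?_ Subtype.val_injective ?_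
    (fun n => TorGrp (Q ⧸ Ideal.span {f}) n M N) (fun n => TorGrp Q n M N)
    (fun n => (TTiso (Q ⧸ Ideal.span {f}) N M n).toAddEquiv) (fun n => ?_)
  · intro z
    rw [← Submodule.coe_eq_zero]
    change j z = 0 ↔ _
    obtain ⟨k, rfl⟩ := one_tmul_surj f z
    rw [hj, one_tmul_zero]
    constructor
    · rintro ⟨x, hx⟩
      refine ⟨p x, ?_⟩
      rw [hα, hφ]
      congr 1
      exact hi (by rw [hg, hx])
    · rintro ⟨m, hm⟩
      obtain ⟨x, rfl⟩ := hp m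
      rw [← one_tmul_zero, ← hj, ← hm, hα, hφ, hj, one_tmul_zero]
      exact ⟨x, hg x⟩
  · rw [injective_iff_map_eq_zero]
    intro m hm
    obtain ⟨x, rfl⟩ := hp m
    rwa [hα, hφp] at hm
  · intro z
    obtain ⟨x, rfl⟩ := one_tmul_surj f z
    rw [hεt]
    constructor
    · intro h
      obtain ⟨k, rfl⟩ := (hex x).1 h
      exact ⟨⟨_, LinearMap.mem_range_self j (TensorProduct.tmul Q 1 k)⟩, hj k⟩
    · rintro ⟨⟨_, ⟨y, rfl⟩⟩, hy⟩
      obtain ⟨k, rfl⟩ := one_tmul_surj f y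
      rw [← hεt, ← hy]
      change ε (j (TensorProduct.tmul Q 1 k)) = 0
      rw [hj, hεt]
      exact hex.apply_apply_eq_zero k
  · intro m
    obtain ⟨x, rfl⟩ := hp m
    exact ⟨_, hεt x⟩
  · rw [hsb]
    exact ((TTiso Q N M (n + 1)).toAddEquiv.trans (TTshift Q N i p hex hi hp n).some).trans
      (TTkerEquiv f N i n (TTcompare f N hf n K hK)).some
end

section
/- Let Q be a Noetherian ring, f a nonzerodivisor on Q, R = Q/(f), and M, N R-modules. If Tor_i^R(M,N) = 0 for n ≤ i ≤ n + c (with c ≥ 1), then Tor_i^Q(M,N) = 0 for n + 1 ≤ i ≤ n + c. -/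
open CategoryTheory

/-- The `i`-th Tor group of two modules over a commutative ring, as an object of `ModuleCat`. -/
noncomputable abbrev TorObj (A : Type) [CommRing A] (i : ℕ)
    (M N : Type) [AddCommGroup M] [Module A M] [AddCommGroup N] [Module A N] :
    ModuleCat.{0} A :=
  ((Tor (ModuleCat.{0} A) i).obj (ModuleCat.of A M)).obj (ModuleCat.of A N)


section ResGen

variable {A : Type} [CommRing A] (X : ℕ → ModuleCat.{0} A) (d : ∀ n, X (n + 1) ⟶ X n)
  (hd : ∀ n, d (n + 1) ≫ d n = 0)

lemma cplx_exact_succ (n : ℕ) (h : Function.Exact (d (n + 1)).hom (d n).hom) :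
    (ChainComplex.of X d hd).ExactAt (n + 1) := by
  rw [HomologicalComplex.exactAt_iff' _ (n + 1 + 1) (n + 1) n (by simp) (by simp),
    ShortComplex.ShortExact.moduleCat_exact_iff_function_exact]
  simp only [HomologicalComplex.sc', HomologicalComplex.shortComplexFunctor', ChainComplex.of_d]
  exact h

lemma exists_projRes (N : ModuleCat.{0} A) [∀ n, Module.Projective A (X n)] (ε : X 0 ⟶ N)
    (hε : Function.Surjective ε.hom) (h0 : Function.Exact (d 0).hom ε.hom)
    (hex : ∀ n, Function.Exact (d (n + 1)).hom (d n).hom) :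
    ∃ P : ProjectiveResolution N, P.complex = ChainComplex.of X d hd := by
  have hz : (ChainComplex.of X d hd).d 1 0 ≫ ε = 0 := by
    have : (ChainComplex.of X d hd).d 1 0 = d 0 := ChainComplex.of_d X d 0
    rw [this]
    ext x
    exact h0.apply_apply_eq_zero x
  refine ⟨{ complex := ChainComplex.of X d hd
            projective := fun n => ?_
            π := (ChainComplex.toSingle₀Equiv _ _).symm ⟨ε, hz⟩
            quasiIso := ⟨fun n => ?_⟩ }, rfl⟩
  · change Projective (X n)
    exact (IsProjective.iff_projective (X n)).1 inferInstance
  · cases n with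
    | zero =>
      rw [ChainComplex.quasiIsoAt₀_iff, ShortComplex.quasiIso_iff_of_zeros']
      · refine (ShortComplex.exact_and_epi_g_iff_of_iso
          (S₂ := ShortComplex.mk (d 0) ε (by
            ext x
            exact h0.apply_apply_eq_zero x)) ?_).2 ⟨?_, ?_⟩
        · exact ShortComplex.isoMk (Iso.refl _) (Iso.refl _) (Iso.refl _)
            ((Category.id_comp _).trans
              ((ChainComplex.of_d X d 0).symm.trans (Category.comp_id _).symm)) (by simp; rfl)
        · rw [ShortComplex.ShortExact.moduleCat_exact_iff_function_exact]
          exact h0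
        · exact (ModuleCat.epi_iff_surjective _).2 hε
      all_goals rfl
    | succ n =>
      rw [quasiIsoAt_iff_exactAt']
      · exact cplx_exact_succ X d hd n (hex n)
      · apply ChainComplex.exactAt_succ_single_obj

end ResGen

section TorGen
open TensorProduct

lemma tor_iff (A : Type) [CommRing A] (M N : Type) [AddCommGroup M] [Module A M]
    [AddCommGroup N] [Module A N] (X : ℕ → ModuleCat.{0} A)
    [∀ n, Module.Projective A (X n)]
    (d : ∀ n, X (n + 1) →ₗ[A] X n) (ε : X 0 →ₗ[A] N)
    (hε : Function.Surjective ε) (h0 : Function.Exact (d 0) ε)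
    (hex : ∀ n, Function.Exact (d (n + 1)) (d n)) :
    (Subsingleton (TorObj A 0 M N) ↔ Function.Surjective ((d 0).lTensor M)) ∧
    ∀ n, (Subsingleton (TorObj A (n+1) M N) ↔
      Function.Exact ((d (n+1)).lTensor M) ((d n).lTensor M)) := by
  have hd : ∀ n, ModuleCat.ofHom (d (n+1)) ≫ ModuleCat.ofHom (d n) = 0 := by
    intro n; ext x; exact (hex n).apply_apply_eq_zero x
  obtain ⟨P, hP⟩ := exists_projRes X (fun n => ModuleCat.ofHom (d n)) hd (ModuleCat.of A N)
    (ModuleCat.ofHom ε) hε h0 hex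
  have key : ∀ n, Subsingleton (TorObj A n M N) ↔
      ((((MonoidalCategory.tensoringLeft (ModuleCat.{0} A)).obj (ModuleCat.of A M)).mapHomologicalComplex
        (ComplexShape.down ℕ)).obj (ChainComplex.of X (fun n => ModuleCat.ofHom (d n)) hd)).ExactAt n := by
    intro n
    rw [← hP, HomologicalComplex.exactAt_iff_isZero_homology, ModuleCat.isZero_iff_subsingleton.symm]
    exact (P.isoLeftDerivedObj
      ((MonoidalCategory.tensoringLeft (ModuleCat.{0} A)).obj (ModuleCat.of A M)) n).isZero_iff
  constructor
  · rw [key, HomologicalComplex.exactAt_iff' _ 1 0 0 (by simp) (by simp),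
      ShortComplex.ShortExact.moduleCat_exact_iff_function_exact]
    have e1 : ChainComplex.of.d X (fun n => ModuleCat.ofHom (d n)) 1 0 = ModuleCat.ofHom (d 0) :=
      ChainComplex.of_d X _ 0
    have e2 : ChainComplex.of.d X (fun n => ModuleCat.ofHom (d n)) 0 0 = 0 :=
      (ChainComplex.of X (fun n => ModuleCat.ofHom (d n)) hd).shape 0 0 (by simp)
    change Function.Exact
      ((((MonoidalCategory.tensoringLeft (ModuleCat.{0} A)).obj (ModuleCat.of A M)).map
        (ChainComplex.of.d X (fun n => ModuleCat.ofHom (d n)) 1 0)).hom)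
      ((((MonoidalCategory.tensoringLeft (ModuleCat.{0} A)).obj (ModuleCat.of A M)).map
        (ChainComplex.of.d X (fun n => ModuleCat.ofHom (d n)) 0 0)).hom) ↔ _
    rw [e1, e2, Functor.map_zero]
    constructor
    · intro h y
      exact (h y).1 rfl
    · intro h y
      exact ⟨fun _ => h y, fun _ => rfl⟩
  · intro n
    rw [key, HomologicalComplex.exactAt_iff' _ (n + 1 + 1) (n + 1) n (by simp) (by simp),
      ShortComplex.ShortExact.moduleCat_exact_iff_function_exact]
    simp only [HomologicalComplex.sc', HomologicalComplex.shortComplexFunctor', 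
      Functor.mapHomologicalComplex_obj_d, ChainComplex.of_d]
    rfl

end TorGen

section FreeRes

/-- syzygies of the canonical free resolution -/
noncomputable def Kres (R N : Type) [CommRing R] [AddCommGroup N] [Module R N] :
    ℕ → ModuleCat.{0} R
  | 0 => ModuleCat.of R N
  | n + 1 => ModuleCat.of R
      (LinearMap.ker (Finsupp.linearCombination R (id : Kres R N n → Kres R N n)))

lemma exists_freeRes (R N : Type) [CommRing R] [AddCommGroup N] [Module R N] :
    ∃ (ι : ℕ → Type) (d : ∀ n, (ι (n + 1) →₀ R) →ₗ[R] (ι n →₀ R)) (ε : (ι 0 →₀ R) →ₗ[R] N),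
      Function.Surjective ε ∧ Function.Exact (d 0) ε ∧
      ∀ n, Function.Exact (d (n + 1)) (d n) := by
  let e : ∀ n, (Kres R N n →₀ R) →ₗ[R] Kres R N n := fun n =>
    Finsupp.linearCombination R (id : Kres R N n → Kres R N n)
  have he : ∀ n, Function.Surjective (e n) := fun n => Finsupp.linearCombination_id_surjective R _
  let j : ∀ n, Kres R N (n + 1) →ₗ[R] (Kres R N n →₀ R) := fun n => (LinearMap.ker (e n)).subtype
  have hj : ∀ n, Function.Injective (j n) := fun n => Submodule.subtype_injective _
  have hje : ∀ n, Function.Exact (j n) (e n) := fun n => LinearMap.exact_subtype_ker_map _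
  have hd0 : ∀ n, Function.Exact (j n ∘ₗ e (n + 1)) (e n) := by
    intro n x
    rw [hje n x]
    constructor
    · rintro ⟨y, rfl⟩
      obtain ⟨z, rfl⟩ := he (n + 1) y
      exact ⟨z, rfl⟩
    · rintro ⟨y, rfl⟩
      exact ⟨_, rfl⟩
  refine ⟨fun n => Kres R N n, fun n => j n ∘ₗ e (n + 1), e 0, he 0, hd0 0, fun n x => ?_⟩
  rw [← hd0 (n + 1) x]
  constructor
  · intro h
    exact hj n (h.trans (map_zero _).symm)
  · intro h
    exact (congrArg (j n) h).trans (map_zero _)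

end FreeRes

section Lift

variable {Q : Type} [CommRing Q] (f : Q)

/-- reduction mod f -/
noncomputable def redf (ι : Type) : (ι →₀ Q) →ₗ[Q] (ι →₀ (Q ⧸ Ideal.span {f})) :=
  Finsupp.mapRange.linearMap (Algebra.linearMap Q (Q ⧸ Ideal.span {f}))

lemma redf_surj (ι : Type) : Function.Surjective (redf f ι) :=
  Finsupp.mapRange_surjective _ (map_zero _) Ideal.Quotient.mk_surjective

lemma redf_smul (ι : Type) (y : ι →₀ Q) : redf f ι (f • y) = 0 := by
  ext i
  simp only [redf, Finsupp.mapRange.linearMap_apply, Finsupp.mapRange_apply, Finsupp.smul_apply,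
    Finsupp.zero_apply, smul_eq_mul]
  exact Ideal.Quotient.eq_zero_iff_mem.2 (Ideal.mul_mem_right _ _ (Ideal.mem_span_singleton_self f))

lemma redf_ker (ι : Type) (x : ι →₀ Q) (hx : redf f ι x = 0) : ∃ y, f • y = x := by
  have h : ∀ i, ∃ b, x i = f * b := fun i => by
    have := DFunLike.congr_fun hx i
    exact Ideal.mem_span_singleton.1 (Ideal.Quotient.eq_zero_iff_mem.1 this)
  choose b hb using h
  classical
  refine ⟨Finsupp.onFinset x.support (fun i => if x i = 0 then 0 else b i) ?_, ?_⟩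
  · intro i hi
    simp only [Finsupp.mem_support_iff]
    intro h
    simp [h] at hi
  · ext i
    by_cases h : x i = 0 
    · simp [h]
    · simp [h, ← hb i]

lemma smul_inj (hf : f ∈ nonZeroDivisors Q) {ι : Type} {x y : ι →₀ Q} (h : f • x = f • y) :
    x = y := by
  ext i
  exact (mul_cancel_left_mem_nonZeroDivisors hf).1 (DFunLike.congr_fun h i)

lemma exists_lift {ι κ : Type}
    (d : (ι →₀ (Q ⧸ Ideal.span {f})) →ₗ[Q ⧸ Ideal.span {f}] (κ →₀ (Q ⧸ Ideal.span {f}))) :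
    ∃ g : (ι →₀ Q) →ₗ[Q] (κ →₀ Q), ∀ x, redf f κ (g x) = d (redf f ι x) := by
  obtain ⟨g, hg⟩ := Module.projective_lifting_property (redf f κ)
    (d.restrictScalars Q ∘ₗ redf f ι) (redf_surj f κ)
  exact ⟨g, fun x => LinearMap.congr_fun hg x⟩

lemma exists_div {ι κ : Type} (g : (ι →₀ Q) →ₗ[Q] (κ →₀ Q)) (hg : ∀ x, redf f κ (g x) = 0) :
    ∃ s : (ι →₀ Q) →ₗ[Q] (κ →₀ Q), ∀ x, f • s x = g x := by
  let m : (κ →₀ Q) →ₗ[Q] LinearMap.ker (redf f κ) :=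
    (f • LinearMap.id).codRestrict _ (fun y => redf_smul f κ y)
  have hm : Function.Surjective m := by
    rintro ⟨x, hx⟩
    obtain ⟨y, hy⟩ := redf_ker f κ x hx
    exact ⟨y, Subtype.ext hy⟩
  obtain ⟨s, hs⟩ := Module.projective_lifting_property m
    (g.codRestrict (LinearMap.ker (redf f κ)) hg) hm
  exact ⟨s, fun x => congrArg Subtype.val (LinearMap.congr_fun hs x)⟩

open TensorProduct

variable (M : Type) [AddCommGroup M] [Module Q M] [Module (Q ⧸ Ideal.span {f}) M]
    [IsScalarTower Q (Q ⧸ Ideal.span {f}) M]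

/-- comparison of tensor products -/
noncomputable def Phi (ι : Type) :
    (M ⊗[Q] (ι →₀ Q)) ≃+ (M ⊗[Q ⧸ Ideal.span {f}] (ι →₀ (Q ⧸ Ideal.span {f}))) :=
  open Classical in
  (TensorProduct.finsuppScalarRight Q Q M ι).toAddEquiv.trans
    (TensorProduct.finsuppScalarRight (Q ⧸ Ideal.span {f}) (Q ⧸ Ideal.span {f}) M ι).symm.toAddEquiv

lemma Phi_tmul (ι : Type) (m : M) (x : ι →₀ Q) : Phi f M ι (m ⊗ₜ x) = m ⊗ₜ redf f ι x := by
  classical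
  unfold Phi
  change (TensorProduct.finsuppScalarRight (Q ⧸ Ideal.span {f}) (Q ⧸ Ideal.span {f}) M ι).symm
    (TensorProduct.finsuppScalarRight Q Q M ι (m ⊗ₜ x)) = _
  rw [LinearEquiv.symm_apply_eq]
  ext i
  rw [TensorProduct.finsuppScalarRight_apply_tmul_apply,
    TensorProduct.finsuppScalarRight_apply_tmul_apply]
  exact (algebraMap_smul (Q ⧸ Ideal.span {f}) (x i) m).symm

lemma Phi_nat {ι κ : Type}
    (d : (ι →₀ (Q ⧸ Ideal.span {f})) →ₗ[Q ⧸ Ideal.span {f}] (κ →₀ (Q ⧸ Ideal.span {f})))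
    (g : (ι →₀ Q) →ₗ[Q] (κ →₀ Q)) (hg : ∀ x, redf f κ (g x) = d (redf f ι x))
    (t : M ⊗[Q] (ι →₀ Q)) :
    Phi f M κ (g.lTensor M t) = d.lTensor M (Phi f M ι t) := by
  induction t with
  | zero => simp
  | add a b ha hb => simp only [map_add, ha, hb]
  | tmul m x => simp [Phi_tmul, hg]

lemma smul_tensor_zero {A : Type} [AddCommGroup A] [Module Q A] (t : M ⊗[Q] A) : f • t = 0 := by
  induction t with
  | zero => simp
  | add a b ha hb => rw [smul_add, ha, hb, add_zero]
  | tmul m x =>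
    rw [TensorProduct.smul_tmul', ← algebraMap_smul (Q ⧸ Ideal.span {f}) f m]
    have : algebraMap Q (Q ⧸ Ideal.span {f}) f = 0 :=
      Ideal.Quotient.eq_zero_iff_mem.2 (Ideal.mem_span_singleton_self f)
    rw [this, zero_smul, zero_tmul]

end Lift

section Main

open TensorProduct

variable {Q : Type} [CommRing Q] (f : Q) (ι : ℕ → Type)
  (g : ∀ n, (ι (n + 1) →₀ Q) →ₗ[Q] (ι n →₀ Q))
  (s : ∀ n, (ι (n + 2) →₀ Q) →ₗ[Q] (ι n →₀ Q))

/-- modules of the `Q`-resolution -/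
noncomputable def Xres : ℕ → ModuleCat.{0} Q
  | 0 => ModuleCat.of Q (ι 0 →₀ Q)
  | n + 1 => ModuleCat.of Q ((ι (n + 1) →₀ Q) × (ι n →₀ Q))

instance Xres_proj (n : ℕ) : Module.Projective Q (Xres (Q := Q) ι n) := by
  cases n with
  | zero => exact inferInstanceAs (Module.Projective Q (ι 0 →₀ Q))
  | succ n => exact inferInstanceAs (Module.Projective Q ((ι (n + 1) →₀ Q) × (ι n →₀ Q)))

/-- first component of the differential -/
noncomputable def Dfst (n : ℕ) : ((ι (n + 1) →₀ Q) × (ι n →₀ Q)) →ₗ[Q] (ι n →₀ Q) :=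
  g n ∘ₗ LinearMap.fst Q _ _ + f • LinearMap.snd Q _ _

/-- second component of the differential -/
noncomputable def Dsnd (n : ℕ) : ((ι (n + 2) →₀ Q) × (ι (n + 1) →₀ Q)) →ₗ[Q] (ι n →₀ Q) :=
  - (s n ∘ₗ LinearMap.fst Q _ _) - g n ∘ₗ LinearMap.snd Q _ _

/-- the higher differential -/
noncomputable def Dsucc (n : ℕ) : ((ι (n + 2) →₀ Q) × (ι (n + 1) →₀ Q)) →ₗ[Q]
    ((ι (n + 1) →₀ Q) × (ι n →₀ Q)) :=
  (Dfst f ι g (n + 1)).prod (Dsnd ι g s n)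

/-- the differential -/
noncomputable def Dres : ∀ n, Xres (Q := Q) ι (n + 1) →ₗ[Q] Xres (Q := Q) ι n
  | 0 => Dfst f ι g 0
  | n + 1 => Dsucc f ι g s n

variable (d : ∀ n, (ι (n + 1) →₀ (Q ⧸ Ideal.span {f})) →ₗ[Q ⧸ Ideal.span {f}]
    (ι n →₀ (Q ⧸ Ideal.span {f})))
  (hf : f ∈ nonZeroDivisors Q)
  (hg : ∀ n x, redf f (ι n) (g n x) = d n (redf f _ x))
  (hs : ∀ n x, f • s n x = g n (g (n + 1) x))
  (hex : ∀ n, Function.Exact (d (n + 1)) (d n))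

include hf hs in
lemma comm_sg (n : ℕ) (x) : s n (g (n + 2) x) = g n (s (n + 1) x) := by
  apply smul_inj f hf
  rw [hs, ← map_smul, hs]

include hs in
lemma Dfst_comp (n : ℕ) (z) : Dfst f ι g n (Dsucc f ι g s n z) = 0 := by
  obtain ⟨x, y⟩ := z
  simp [Dfst, Dsnd, Dsucc, ← hs, smul_sub]

include hf hs in
lemma Dsnd_comp (n : ℕ) (z) : Dsnd ι g s n (Dsucc f ι g s (n + 1) z) = 0 := by
  obtain ⟨x, y⟩ := z
  simp [Dfst, Dsnd, Dsucc, ← hs, comm_sg f ι g s hf hs]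
  abel

include hf hg hs hex in
lemma Dfst_exact (n : ℕ) (z) (hz : Dfst f ι g n z = 0) : ∃ w, Dsucc f ι g s n w = z := by
  obtain ⟨x, y⟩ := z
  have hz' : g n x + f • y = 0 := hz
  have h1 : d n (redf f _ x) = 0 := by
    rw [← hg, eq_neg_of_add_eq_zero_left hz', map_neg, redf_smul, neg_zero]
  obtain ⟨t, ht⟩ := (hex n _).1 h1
  obtain ⟨x', rfl⟩ := redf_surj f _ t
  rw [← hg] at ht
  obtain ⟨y', hy'⟩ := redf_ker f _ (x - g (n + 1) x') (by rw [map_sub, ht, sub_self])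
  have hx : x = g (n + 1) x' + f • y' := by rw [hy']; abel
  refine ⟨(x', y'), Prod.ext hx.symm ?_⟩
  apply smul_inj f hf
  have : f • y = - g n x := eq_neg_of_add_eq_zero_right hz'
  change f • (-(s n x') - g n y') = f • y
  rw [this, hx, map_add, map_smul, ← hs, smul_sub, smul_neg]
  abel

include hf hg hs hex in
lemma Dres_exact (n : ℕ) : Function.Exact (Dres f ι g s (n + 1)) (Dres f ι g s n) := by
  cases n with
  | zero =>
    intro z
    constructor
    · intro hz
      exact Dfst_exact f ι g s d hf hg hs hex 0 z hz
    · rintro ⟨w, rfl⟩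
      exact Dfst_comp f ι g s hs 0 w
  | succ n =>
    intro z
    constructor
    · intro hz
      exact Dfst_exact f ι g s d hf hg hs hex (n + 1) z (congrArg Prod.fst hz)
    · rintro ⟨w, rfl⟩
      exact Prod.ext (Dfst_comp f ι g s hs (n + 1) w) (Dsnd_comp f ι g s hf hs n w)

variable (M : Type) [AddCommGroup M] [Module Q M] [Module (Q ⧸ Ideal.span {f}) M]
    [IsScalarTower Q (Q ⧸ Ideal.span {f}) M]

lemma lT_inl (n : ℕ) (x : M ⊗[Q] (ι (n + 2) →₀ Q)) :
    (Dsucc f ι g s n).lTensor M ((LinearMap.inl Q _ _).lTensor M x) =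
      (LinearMap.inl Q _ _).lTensor M ((g (n + 1)).lTensor M x) -
      (LinearMap.inr Q _ _).lTensor M ((s n).lTensor M x) := by
  simp only [← LinearMap.lTensor_comp_apply, ← LinearMap.sub_apply, ← LinearMap.lTensor_sub]
  congr 2
  ext <;> simp [Dsucc, Dfst, Dsnd]

lemma lT_inr (n : ℕ) (x : M ⊗[Q] (ι (n + 1) →₀ Q)) :
    (Dsucc f ι g s n).lTensor M ((LinearMap.inr Q _ _).lTensor M x) =
      - (LinearMap.inr Q _ _).lTensor M ((g n).lTensor M x) := by
  have : (Dsucc f ι g s n).lTensor M ((LinearMap.inr Q _ _).lTensor M x) =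
      f • (LinearMap.inl Q _ _).lTensor M x
      - (LinearMap.inr Q _ _).lTensor M ((g n).lTensor M x) := by
    simp only [← LinearMap.lTensor_comp_apply, ← LinearMap.sub_apply, ← LinearMap.lTensor_sub,
      ← LinearMap.smul_apply, ← LinearMap.lTensor_smul]
    congr 2
    ext <;> simp [Dsucc, Dfst, Dsnd]
  rw [this, smul_tensor_zero, zero_sub]

lemma lT_decomp {A B : Type} [AddCommGroup A] [Module Q A] [AddCommGroup B] [Module Q B]
    (z : M ⊗[Q] (A × B)) :
    z = (LinearMap.inl Q A B).lTensor M ((LinearMap.fst Q A B).lTensor M z) +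
      (LinearMap.inr Q A B).lTensor M ((LinearMap.snd Q A B).lTensor M z) := by
  simp only [← LinearMap.lTensor_comp_apply, ← LinearMap.add_apply, ← LinearMap.lTensor_add]
  conv_lhs => rw [← LinearMap.id_apply (R := Q) z, ← LinearMap.lTensor_id]
  congr 2
  ext <;> simp

lemma lT_Dfst (n : ℕ) (z : M ⊗[Q] ((ι (n + 1) →₀ Q) × (ι n →₀ Q))) :
    (Dfst f ι g n).lTensor M z = (g n).lTensor M ((LinearMap.fst Q _ _).lTensor M z) := by
  rw [Dfst, LinearMap.lTensor_add, LinearMap.lTensor_smul, LinearMap.add_apply,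
    LinearMap.smul_apply, smul_tensor_zero, add_zero, LinearMap.lTensor_comp_apply]

/-- common step -/
lemma lT_step (n : ℕ) (hex1 : Function.Exact ((g (n + 1)).lTensor M) ((g n).lTensor M))
    (z : M ⊗[Q] ((ι (n + 1) →₀ Q) × (ι n →₀ Q))) (hz : (Dfst f ι g n).lTensor M z = 0) :
    ∃ u w, z = (Dsucc f ι g s n).lTensor M u + (LinearMap.inr Q _ _).lTensor M w := by
  rw [lT_Dfst] at hz
  obtain ⟨x', hx'⟩ := (hex1 _).1 hz
  refine ⟨(LinearMap.inl Q _ _).lTensor M x',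
    (LinearMap.snd Q _ _).lTensor M z + (s n).lTensor M x', ?_⟩
  rw [lT_inl, hx', map_add]
  conv_lhs => rw [lT_decomp M z]
  abel

lemma lT_finish (n : ℕ) (z : M ⊗[Q] ((ι (n + 1) →₀ Q) × (ι n →₀ Q))) (u w)
    (h : z = (Dsucc f ι g s n).lTensor M u + (LinearMap.inr Q _ _).lTensor M w)
    (hw : ∃ w', (g n).lTensor M w' = w) : ∃ v, (Dsucc f ι g s n).lTensor M v = z := by
  obtain ⟨w', rfl⟩ := hw
  refine ⟨u - (LinearMap.inr Q _ _).lTensor M w', ?_⟩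
  rw [map_sub, lT_inr, h, sub_neg_eq_add]

include hs hf hg hex in
lemma lT_exact_zero (hex1 : Function.Exact ((g 1).lTensor M) ((g 0).lTensor M))
    (hsurj : Function.Surjective ((g 0).lTensor M)) :
    Function.Exact ((Dres f ι g s 1).lTensor M) ((Dres f ι g s 0).lTensor M) := by
  intro z
  constructor
  · intro hz
    obtain ⟨u, w, h⟩ := lT_step f ι g s M 0 hex1 z hz
    exact lT_finish f ι g s M 0 z u w h (hsurj w)
  · rintro ⟨w, rfl⟩
    rw [← LinearMap.lTensor_comp_apply,
      (Dres_exact f ι g s d hf hg hs hex 0).linearMap_comp_eq_zero, LinearMap.lTensor_zero]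
    rfl

include hs hf hg hex in
lemma lT_exact_succ (n : ℕ)
    (hex1 : Function.Exact ((g (n + 2)).lTensor M) ((g (n + 1)).lTensor M))
    (hex0 : Function.Exact ((g (n + 1)).lTensor M) ((g n).lTensor M)) :
    Function.Exact ((Dres f ι g s (n + 2)).lTensor M) ((Dres f ι g s (n + 1)).lTensor M) := by
  have hzero : ∀ u, (Dsucc f ι g s n).lTensor M ((Dsucc f ι g s (n + 1)).lTensor M u) = 0 := by
    intro u
    rw [← LinearMap.lTensor_comp_apply]
    have : Dsucc f ι g s n ∘ₗ Dsucc f ι g s (n + 1) = 0 :=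
      (Dres_exact f ι g s d hf hg hs hex (n + 1)).linearMap_comp_eq_zero
    rw [this, LinearMap.lTensor_zero]
    rfl
  change Function.Exact ((Dsucc f ι g s (n + 1)).lTensor M) ((Dsucc f ι g s n).lTensor M)
  intro z
  constructor
  · intro hz
    have hz1 : (Dfst f ι g (n + 1)).lTensor M z = 0 := by
      have : Dfst f ι g (n + 1) = LinearMap.fst Q _ _ ∘ₗ Dsucc f ι g s n := rfl
      rw [this, LinearMap.lTensor_comp_apply, hz, map_zero]
    obtain ⟨u, w, h⟩ := lT_step f ι g s M (n + 1) hex1 z hz1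
    refine lT_finish f ι g s M (n + 1) z u w h ((hex0 w).1 ?_)
    rw [h, map_add, hzero, zero_add, lT_inr, neg_eq_zero] at hz
    have h2 := congrArg ((LinearMap.snd Q _ _).lTensor M) hz
    rw [← LinearMap.lTensor_comp_apply, LinearMap.snd_comp_inr, LinearMap.lTensor_id,
      map_zero] at h2
    exact h2
  · rintro ⟨w, rfl⟩
    exact hzero w

include hg in
lemma transfer_exact (n : ℕ) (h : Function.Exact ((d (n + 1)).lTensor M) ((d n).lTensor M)) :
    Function.Exact ((g (n + 1)).lTensor M) ((g n).lTensor M) := by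
  intro z
  have e := h (Phi f M _ z)
  rw [← Phi_nat f M (d n) (g n) (hg n), map_eq_zero_iff _ (AddEquiv.injective _)] at e
  rw [e]
  constructor
  · rintro ⟨y, hy⟩
    obtain ⟨y, rfl⟩ := (Phi f M _).surjective y
    rw [← Phi_nat f M _ (g (n + 1)) (hg (n + 1))] at hy
    exact ⟨y, (Phi f M _).injective hy⟩
  · rintro ⟨y, rfl⟩
    exact ⟨Phi f M _ y, (Phi_nat f M _ (g (n + 1)) (hg (n + 1)) y).symm⟩

include hg in
lemma transfer_surj (n : ℕ) (h : Function.Surjective ((d n).lTensor M)) :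
    Function.Surjective ((g n).lTensor M) := by
  intro z
  obtain ⟨y, hy⟩ := h (Phi f M _ z)
  obtain ⟨y, rfl⟩ := (Phi f M _).surjective y
  rw [← Phi_nat f M _ (g n) (hg n)] at hy
  exact ⟨y, (Phi f M _).injective hy⟩

end Main

/-- Let `Q` be a Noetherian ring, `f` a nonzerodivisor on `Q`, `R = Q/(f)`, and
`M, N` finitely generated `R`-modules.  If `Tor_i^R(M,N) = 0` for `n ≤ i ≤ n + c`
(with `c ≥ 1`), then `Tor_i^Q(M,N) = 0` for `n + 1 ≤ i ≤ n + c`. -/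
theorem stmt3 (Q : Type) [CommRing Q] [IsNoetherianRing Q]
    (f : Q) (hf : f ∈ nonZeroDivisors Q)
    (M N : Type) [AddCommGroup M] [AddCommGroup N]
    [Module Q M] [Module Q N]
    [Module (Q ⧸ Ideal.span {f}) M] [Module (Q ⧸ Ideal.span {f}) N]
    [IsScalarTower Q (Q ⧸ Ideal.span {f}) M] [IsScalarTower Q (Q ⧸ Ideal.span {f}) N]
    [Module.Finite (Q ⧸ Ideal.span {f}) M] [Module.Finite (Q ⧸ Ideal.span {f}) N]
    (n c : ℕ) (hc : 1 ≤ c)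
    (hR : ∀ i : ℕ, n ≤ i → i ≤ n + c → Subsingleton (TorObj (Q ⧸ Ideal.span {f}) i M N)) :
    ∀ i : ℕ, n + 1 ≤ i → i ≤ n + c → Subsingleton (TorObj Q i M N) := by
  intro i hi1 hi2
  obtain ⟨ι, d, ε, hε, h0, hex⟩ := exists_freeRes (Q ⧸ Ideal.span {f}) N
  have hT := tor_iff (Q ⧸ Ideal.span {f}) M N
    (fun n => ModuleCat.of _ (ι n →₀ (Q ⧸ Ideal.span {f}))) d ε hε h0 hex
  choose g hg using fun n => exists_lift f (d n)
  have hgg : ∀ n, ∀ x, redf f (ι n) ((g n ∘ₗ g (n + 1)) x) = 0 := by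
    intro n x
    rw [LinearMap.comp_apply, hg, hg]
    exact (hex n).apply_apply_eq_zero _
  choose s hs using fun n => exists_div f (g n ∘ₗ g (n + 1)) (hgg n)
  have hQ := tor_iff Q M N (Xres ι) (Dres f ι g s) (ε.restrictScalars Q ∘ₗ redf f (ι 0))
    (hε.comp (redf_surj f _)) (by
      change Function.Exact (Dfst f ι g 0) (ε.restrictScalars Q ∘ₗ redf f (ι 0))
      intro z
      constructor
      · intro hz
        obtain ⟨t, ht⟩ := (h0 _).1 hz
        obtain ⟨x', rfl⟩ := redf_surj f _ t
        rw [← hg] at ht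
        obtain ⟨y', hy'⟩ := redf_ker f _ (z - g 0 x') 
          (by rw [map_sub, ht, sub_self])
        refine ⟨(x', y'), ?_⟩
        change g 0 x' + f • y' = z
        rw [hy']
        exact add_sub_cancel _ _
      · rintro ⟨⟨x, y⟩, rfl⟩
        change ε (redf f (ι 0) (g 0 x + f • y)) = 0
        rw [map_add, redf_smul, add_zero, hg]
        exact h0.apply_apply_eq_zero _)
    (Dres_exact f ι g s d hf hg hs hex)
  obtain ⟨k, rfl⟩ : ∃ k, i = k + 1 := ⟨i - 1, by omega⟩
  rw [hQ.2 k]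
  have hk1 := transfer_exact f ι g d hg M k ((hT.2 k).1 (hR (k + 1) (by omega) hi2))
  have hk0 := hR k (by omega) (by omega)
  cases k with
  | zero => exact lT_exact_zero f ι g s d hf hg hs hex M hk1 (transfer_surj f ι g d hg M 0 (hT.1.1 hk0))
  | succ k => exact lT_exact_succ f ι g s d hf hg hs hex M k hk1
                (transfer_exact f ι g d hg M k ((hT.2 k).1 hk0))
end
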